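/- Let φ be a Schwartz function on ℝ with supp φ̂ ⊆ (0,1) which is non-degenerate, i.e. ∫_{−∞}^{0} e^{2πit} φ(t) dt ≠ 0; let ψ be a Schwartz function with ψ̂ ≡ 1 on [1, 3/2]; set h(u) = e^{2πiu} 𝟙_{[0,∞)}(u), f₀ = h∗ψ, and for m ∈ ℤ, φ_m(x) = 2^m e^{2πi(1+2^m)x} φ(2^m x). Then: (a) f₀ is bounded and Lipschitz (hence has finite Hölder seminorm of every order s ∈ (0,1)); (b) (f₀∗φ_m)(0) = ∫_{−∞}^{0} e^{2πit} φ(t) dt for every m ≤ −2, and consequently Σ_{m ≤ −2} |(f₀∗φ_m)(0)|² = ∞. In particular, the Rubio de Francia operator without rotations associated with the collection {[1+2^m, 1+2^{m+1}]}_{m ≤ −2} does not map f₀ to an ℓ²-valued function, so it is not bounded on the homogeneous Hölder space Ċ^s. -/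

import Mathlib

open MeasureTheory Real Set Function
open scoped FourierTransform ENNReal NNReal

/-- `e2pi t = e^{2πit}`. -/
noncomputable def e2pi (t : ℝ) : ℂ := Complex.exp (2 * (Real.pi : ℂ) * Complex.I * (t : ℂ))

/-- Convolution of two functions on `ℝ`. -/
noncomputable def conv (f g : ℝ → ℂ) (x : ℝ) : ℂ := ∫ t, f t * g (x - t)

/-- The modulated Heaviside function `h(u) = e^{2πiu} 𝟙_{[0,∞)}(u)`. -/
noncomputable def heav : ℝ → ℂ := Set.indicator (Set.Ici (0:ℝ)) fun u => e2pi u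

/-- The function `φ_m` associated with the dyadic interval `[1+2^m, 1+2^{m+1}]`:
`φ_m(x) = 2^m e^{2πi(1+2^m)x} φ(2^m x)`. -/
noncomputable def phimDyadic (φ : ℝ → ℂ) (m : ℤ) (x : ℝ) : ℂ :=
  (((2:ℝ) ^ m : ℝ) : ℂ) * e2pi ((1 + (2:ℝ) ^ m) * x) * φ ((2:ℝ) ^ m * x)

lemma e2pi_add (a b : ℝ) : e2pi (a + b) = e2pi a * e2pi b := by
  unfold e2pi
  rw [← Complex.exp_add]
  congr 1
  push_cast
  ring

lemma e2pi_zero : e2pi 0 = 1 := by simp [e2pi]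

lemma e2pi_eq (t : ℝ) : e2pi t = Complex.exp (Complex.I * ((2 * Real.pi * t : ℝ) : ℂ)) := by
  unfold e2pi
  congr 1
  push_cast
  ring

lemma norm_e2pi (t : ℝ) : ‖e2pi t‖ = 1 := by
  rw [e2pi_eq, mul_comm]
  exact Complex.norm_exp_ofReal_mul_I _

lemma continuous_e2pi : Continuous e2pi := by
  unfold e2pi
  fun_prop

lemma e2pi_lip (x y : ℝ) : ‖e2pi x - e2pi y‖ ≤ 2 * Real.pi * |x - y| := by
  have h : e2pi x - e2pi y = e2pi y * (e2pi (x - y) - 1) := by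
    rw [mul_sub, ← e2pi_add]
    simp
  rw [h, norm_mul, norm_e2pi, one_mul, e2pi_eq]
  refine (Real.norm_exp_I_mul_ofReal_sub_one_le).trans ?_
  rw [Real.norm_eq_abs, abs_mul, abs_of_pos Real.two_pi_pos]

lemma heav_measurable : Measurable heav :=
  continuous_e2pi.measurable.indicator measurableSet_Ici

lemma norm_heav_le (t : ℝ) : ‖heav t‖ ≤ 1 := by
  unfold heav
  refine (norm_indicator_le_norm_self _ _).trans ?_
  rw [norm_e2pi]

/-- The convolution with `heav` as a modulated primitive. -/
lemma conv_heav_eq (ψ : SchwartzMap ℝ ℂ) (x : ℝ) :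
    conv heav ψ x = e2pi x * ∫ u in Set.Iic x, e2pi (-u) * ψ u := by
  unfold conv
  rw [← integral_sub_left_eq_self _ volume x, ← integral_indicator measurableSet_Iic,
    ← integral_const_mul]
  refine integral_congr_ae (Filter.Eventually.of_forall fun u => ?_)
  by_cases hu : u ≤ x
  · simp [heav, Set.indicator, hu, sub_eq_add_neg x u, e2pi_add, mul_assoc]
  · simp [heav, Set.indicator, hu]

lemma integrable_mod (ψ : SchwartzMap ℝ ℂ) : Integrable fun u => e2pi (-u) * ψ u :=
  ψ.integrable.bdd_mul (c := 1) (continuous_e2pi.comp continuous_neg).aestronglyMeasurable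
    (Filter.Eventually.of_forall fun u => (norm_e2pi _).le)

lemma norm_prim_le (ψ : SchwartzMap ℝ ℂ) (x : ℝ) :
    ‖∫ u in Set.Iic x, e2pi (-u) * ψ u‖ ≤ ∫ u, ‖ψ u‖ := by
  refine (norm_integral_le_integral_norm _).trans ?_
  simp only [norm_mul, norm_e2pi, one_mul]
  exact setIntegral_le_integral ψ.integrable.norm
    (Filter.Eventually.of_forall fun u => norm_nonneg _)

lemma prim_lip (ψ : SchwartzMap ℝ ℂ) : ∃ C : ℝ, ∀ x y : ℝ,
    ‖(∫ u in Set.Iic x, e2pi (-u) * ψ u) - ∫ u in Set.Iic y, e2pi (-u) * ψ u‖ ≤ C * |x - y| := by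
  obtain ⟨C, hC⟩ := ψ.decay 0 0
  refine ⟨C, fun x y => ?_⟩
  rw [intervalIntegral.integral_Iic_sub_Iic (integrable_mod ψ).integrableOn
    (integrable_mod ψ).integrableOn]
  refine intervalIntegral.norm_integral_le_of_norm_le_const fun u _ => ?_
  rw [norm_mul, norm_e2pi, one_mul]
  simpa using hC.2 u

lemma partA (ψ : SchwartzMap ℝ ℂ) : (∃ M : ℝ, ∀ x : ℝ, ‖conv heav ⇑ψ x‖ ≤ M) ∧
      ∃ L : ℝ, ∀ x y : ℝ, ‖conv heav ⇑ψ x - conv heav ⇑ψ y‖ ≤ L * |x - y| := by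
  constructor
  · refine ⟨∫ u, ‖ψ u‖, fun x => ?_⟩
    rw [conv_heav_eq, norm_mul, norm_e2pi, one_mul]
    exact norm_prim_le ψ x
  · obtain ⟨C, hC⟩ := prim_lip ψ
    refine ⟨C + 2 * Real.pi * ∫ u, ‖ψ u‖, fun x y => ?_⟩
    rw [conv_heav_eq, conv_heav_eq]
    have h1 := hC x y
    have h2 := norm_prim_le ψ y
    have h3 := e2pi_lip x y
    set A := ∫ u in Set.Iic x, e2pi (-u) * ψ u
    set B := ∫ u in Set.Iic y, e2pi (-u) * ψ u
    have h : e2pi x * A - e2pi y * B = e2pi x * (A - B) + (e2pi x - e2pi y) * B := by ring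
    rw [h]
    refine (norm_add_le _ _).trans ?_
    rw [norm_mul, norm_mul, norm_e2pi, one_mul]
    have h4 : ‖e2pi x - e2pi y‖ * ‖B‖ ≤ (2 * Real.pi * |x - y|) * ∫ u, ‖ψ u‖ :=
      mul_le_mul h3 h2 (norm_nonneg _) (by positivity)
    linarith

lemma fourier_e2pi (f : ℝ → ℂ) (ξ : ℝ) : 𝓕 f ξ = ∫ t, e2pi (-(ξ * t)) * f t := by
  rw [Real.fourier_real_eq_integral_exp_smul]
  refine integral_congr_ae (Filter.Eventually.of_forall fun u => ?_)
  simp only [smul_eq_mul, e2pi]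
  congr 2
  push_cast
  ring

lemma inversion (φ : SchwartzMap ℝ ℂ) (x : ℝ) : φ x = ∫ η, e2pi (η * x) * 𝓕 ⇑φ η := by
  have hi : Integrable (𝓕 ⇑φ) := (𝓕 φ).integrable
  have h := congrFun (φ.continuous.fourierInv_fourier_eq φ.integrable hi) x
  rw [← h, Real.fourierInv_eq']
  refine integral_congr_ae (Filter.Eventually.of_forall fun u => ?_)
  have h1 : inner ℝ u x = u * x := by simp [mul_comm]
  simp only [smul_eq_mul, e2pi, h1]
  congr 2
  push_cast
  ring

lemma phim_eq (φ : SchwartzMap ℝ ℂ) (m : ℤ) (x : ℝ) :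
    phimDyadic φ m x = (((2:ℝ) ^ m : ℝ) : ℂ) *
      ∫ η, e2pi ((1 + (2:ℝ) ^ m * (1 + η)) * x) * 𝓕 ⇑φ η := by
  unfold phimDyadic
  rw [inversion φ, mul_assoc, ← integral_const_mul]
  congr 2
  ext η
  rw [← mul_assoc, ← e2pi_add]
  congr 2
  ring

lemma phim_integrable (φ : SchwartzMap ℝ ℂ) (m : ℤ) : Integrable (phimDyadic φ m) := by
  have h2 : ((2:ℝ) ^ m) ≠ 0 := by positivity
  have h := (φ.integrable (μ := volume)).comp_mul_left' h2
  have h3 := (h.bdd_mul (c := 1) (f := fun x => e2pi ((1 + (2:ℝ) ^ m) * x))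
    (continuous_e2pi.comp (by fun_prop)).aestronglyMeasurable
    (Filter.Eventually.of_forall fun u => (norm_e2pi _).le)).const_mul (((2:ℝ) ^ m : ℝ) : ℂ)
  refine h3.congr (Filter.Eventually.of_forall fun x => ?_)
  simp only [phimDyadic]
  ring

/-- `ψ ∗ φ_m = φ_m`, evaluated at `-s`. -/
lemma reproduce (φ : SchwartzMap ℝ ℂ)
    (hφ : Function.support (𝓕 ⇑φ) ⊆ Set.Ioo 0 1)
    (ψ : SchwartzMap ℝ ℂ) (hψ : ∀ ξ ∈ Set.Icc (1:ℝ) (3/2), 𝓕 ⇑ψ ξ = 1)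
    (m : ℤ) (hm : m ≤ -2) (s : ℝ) :
    ∫ t, ψ (t - s) * phimDyadic φ m (-t) = phimDyadic φ m (-s) := by
  have hi : Integrable (𝓕 ⇑φ) := (𝓕 φ).integrable
  have h2 : (0:ℝ) < (2:ℝ) ^ m := by positivity
  have h2' : (2:ℝ) ^ m ≤ 1 / 4 := by
    calc (2:ℝ) ^ m ≤ (2:ℝ) ^ (-2 : ℤ) := zpow_le_zpow_right₀ (by norm_num) hm
      _ = 1 / 4 := by norm_num
  set c : ℝ → ℝ := fun η => 1 + (2:ℝ) ^ m * (1 + η) with hc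
  have hcc : Continuous c := by fun_prop
  have key : ∫ t, ∫ η, ψ (t - s) * (e2pi (c η * (-t)) * 𝓕 ⇑φ η) =
      ∫ η, ∫ t, ψ (t - s) * (e2pi (c η * (-t)) * 𝓕 ⇑φ η) := by
    apply integral_integral_swap
    have h := ((ψ.integrable (μ := volume)).comp_sub_right s).mul_prod hi
    have h3 := h.bdd_mul (c := 1) (f := fun p : ℝ × ℝ => e2pi (c p.2 * (-p.1)))
      (continuous_e2pi.comp (by fun_prop)).aestronglyMeasurable
      (Filter.Eventually.of_forall fun u => (norm_e2pi _).le)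
    refine h3.congr (Filter.Eventually.of_forall fun x => ?_)
    simp only [Function.uncurry]
    ring
  have inner_eq : ∀ η, ∫ t, ψ (t - s) * (e2pi (c η * (-t)) * 𝓕 ⇑φ η) =
      e2pi (c η * (-s)) * 𝓕 ⇑φ η := by
    intro η
    by_cases hη : 𝓕 ⇑φ η = 0
    · simp [hη]
    have hmem := hφ (Function.mem_support.mpr hη)
    have h1 : 𝓕 ⇑ψ (c η) = 1 := by
      refine hψ _ ⟨?_, ?_⟩ <;> simp only [hc] <;> nlinarith [hmem.1, hmem.2]
    rw [← integral_add_right_eq_self _ s]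
    have h4 : ∀ t, ψ (t + s - s) * (e2pi (c η * (-(t + s))) * 𝓕 ⇑φ η) =
        (e2pi (c η * (-s)) * 𝓕 ⇑φ η) * (e2pi (-(c η * t)) * ψ t) := by
      intro t
      have : c η * (-(t + s)) = c η * (-s) + -(c η * t) := by ring
      rw [this, e2pi_add, add_sub_cancel_right]
      ring
    simp_rw [h4]
    rw [integral_const_mul, ← fourier_e2pi, h1, mul_one]
  simp_rw [inner_eq] at key
  rw [phim_eq, ← key, ← integral_const_mul]
  congr 1
  ext t
  rw [phim_eq, integral_const_mul]
  ring

lemma partB (φ : SchwartzMap ℝ ℂ)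
    (hφ : Function.support (𝓕 ⇑φ) ⊆ Set.Ioo 0 1)
    (ψ : SchwartzMap ℝ ℂ) (hψ : ∀ ξ ∈ Set.Icc (1:ℝ) (3/2), 𝓕 ⇑ψ ξ = 1)
    (m : ℤ) (hm : m ≤ -2) :
    conv (conv heav ⇑ψ) (phimDyadic ⇑φ m) 0 = ∫ t in Set.Iic (0:ℝ), e2pi t * φ t := by
  have h2 : (0:ℝ) < (2:ℝ) ^ m := by positivity
  have swap : ∫ s, ∫ t, heav s * (ψ (t - s) * phimDyadic φ m (-t)) =
      ∫ t, ∫ s, heav s * (ψ (t - s) * phimDyadic φ m (-t)) := by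
    apply integral_integral_swap
    have h := (phim_integrable φ m).comp_neg.convolution_integrand
      (ContinuousLinearMap.mul ℂ ℂ) (ψ.integrable (μ := volume)).comp_neg
    have h3 := h.bdd_mul (c := 1) (f := fun p : ℝ × ℝ => heav p.1)
      (heav_measurable.comp measurable_fst).aestronglyMeasurable
      (Filter.Eventually.of_forall fun u => norm_heav_le _)
    refine h3.congr (Filter.Eventually.of_forall fun x => ?_)
    simp only [Function.uncurry, ContinuousLinearMap.mul_apply', neg_sub]
    ring
  have hL : conv (conv heav ⇑ψ) (phimDyadic ⇑φ m) 0 =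
      ∫ t, ∫ s, heav s * (ψ (t - s) * phimDyadic φ m (-t)) := by
    unfold conv
    congr 1
    ext t
    rw [← integral_mul_const, zero_sub]
    simp only [mul_assoc]
  rw [hL, ← swap]
  simp_rw [integral_const_mul, reproduce φ hφ ψ hψ m hm]
  have h5 : ∀ s, heav s * phimDyadic φ m (-s) = Set.indicator (Set.Ici (0:ℝ))
      (fun s => (((2:ℝ) ^ m : ℝ) : ℂ) * (e2pi (-((2:ℝ) ^ m * s)) * φ (-((2:ℝ) ^ m * s)))) s := by
    intro s
    by_cases hs : 0 ≤ s
    · simp only [heav, Set.indicator, Set.mem_Ici, hs, if_true, phimDyadic]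
      have : -((2:ℝ) ^ m * s) = s + (1 + (2:ℝ) ^ m) * (-s) := by ring
      rw [mul_neg ((2:ℝ) ^ m) s]
      conv_rhs => rw [show e2pi (-((2:ℝ) ^ m * s)) = e2pi s * e2pi ((1 + (2:ℝ) ^ m) * (-s)) by
        rw [← e2pi_add, this]]
      ring
    · simp [heav, Set.indicator, hs]
  simp_rw [h5]
  rw [integral_indicator measurableSet_Ici, integral_Ici_eq_integral_Ioi, integral_const_mul]
  have h6 := integral_comp_mul_left_Ioi' (fun u => e2pi (-u) * φ (-u)) 0 h2
  have h7 := integral_comp_neg_Ioi 0 (fun u => e2pi u * φ u)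
  simp only [mul_zero, neg_zero, Complex.real_smul] at h6 h7
  rw [h6, h7]

instance infinite_index : Infinite {m : ℤ // m ≤ -2} :=
  (Set.Iic_infinite (-2 : ℤ)).to_subtype

/-- let `φ` be a non-degenerate Schwartz function with `supp 𝓕φ ⊆ (0,1)`, `ψ`
Schwartz with `𝓕ψ ≡ 1` on `[1,3/2]`, and `f₀ = h∗ψ`. Then (a) `f₀` is bounded and Lipschitz,
and (b) `(f₀∗φ_m)(0) = ∫_{-∞}^0 e^{2πit} φ(t) dt` for every `m ≤ -2`, so that
`Σ_{m ≤ -2} |(f₀∗φ_m)(0)|² = ∞`. -/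
theorem statement16 (φ : SchwartzMap ℝ ℂ)
    (hφ : Function.support (𝓕 ⇑φ) ⊆ Set.Ioo 0 1)
    (hnd : (∫ t in Set.Iic (0:ℝ), e2pi t * φ t) ≠ 0)
    (ψ : SchwartzMap ℝ ℂ) (hψ : ∀ ξ ∈ Set.Icc (1:ℝ) (3/2), 𝓕 ⇑ψ ξ = 1) :
    ((∃ M : ℝ, ∀ x : ℝ, ‖conv heav ⇑ψ x‖ ≤ M) ∧
      ∃ L : ℝ, ∀ x y : ℝ, ‖conv heav ⇑ψ x - conv heav ⇑ψ y‖ ≤ L * |x - y|) ∧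
    (∀ m : ℤ, m ≤ -2 →
        conv (conv heav ⇑ψ) (phimDyadic ⇑φ m) 0 = ∫ t in Set.Iic (0:ℝ), e2pi t * φ t) ∧
      (∑' m : {m : ℤ // m ≤ -2},
        (‖conv (conv heav ⇑ψ) (phimDyadic ⇑φ (m : ℤ)) 0‖₊ : ℝ≥0∞) ^ 2) = ∞ := by
  refine ⟨partA ψ, fun m hm => partB φ hφ ψ hψ m hm, ?_⟩
  have h : ∀ m : {m : ℤ // m ≤ -2}, (‖conv (conv heav ⇑ψ) (phimDyadic ⇑φ (m : ℤ)) 0‖₊ : ℝ≥0∞) ^ 2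
      = (‖∫ t in Set.Iic (0:ℝ), e2pi t * φ t‖₊ : ℝ≥0∞) ^ 2 := fun m => by
    rw [partB φ hφ ψ hψ m m.2]
  simp_rw [h]
  apply ENNReal.tsum_const_eq_top_of_ne_zero
  simpa using hnd
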